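/- Let D be a simply connected open subset of the half-plane {(z,ρ) ∈ ℝ² : ρ > 0} and let E : D → ℂ be twice continuously differentiable with Re E > 0, satisfying the Ernst equation on D. Then there exists a continuously differentiable real-valued function k : D → ℝ such that ∂_ξ k = 2iρ · (∂_ξ E)(∂_ξ Ē)/(E + Ē)² on D, where ξ = z + iρ and ∂_ξ = ½(∂_z − i∂_ρ). Equivalently, the quantity ∂_ξ̄ [2iρ (∂_ξ E)(∂_ξ Ē)/(E + Ē)²] is real-valued on D, which is the integrability condition for the conformal factor e^{2k}. -/

import Mathlib

open Complex

noncomputable section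

/-- Partial derivative of a complex-valued function on `ℝ²` with respect to
the first coordinate `z`. -/
def pz (f : ℝ × ℝ → ℂ) (p : ℝ × ℝ) : ℂ := deriv (fun t : ℝ => f (t, p.2)) p.1

/-- Partial derivative of a complex-valued function on `ℝ²` with respect to
the second coordinate `ρ`. -/
def pr (f : ℝ × ℝ → ℂ) (p : ℝ × ℝ) : ℂ := deriv (fun t : ℝ => f (p.1, t)) p.2

/-- `∂_ξ = ½(∂_z − i ∂_ρ)`. -/
def dXi (f : ℝ × ℝ → ℂ) (p : ℝ × ℝ) : ℂ :=
  (2 : ℂ)⁻¹ * (pz f p - Complex.I * pr f p)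

/-- `∂_ξ̄ = ½(∂_z + i ∂_ρ)`. -/
def dXiBar (f : ℝ × ℝ → ℂ) (p : ℝ × ℝ) : ℂ :=
  (2 : ℂ)⁻¹ * (pz f p + Complex.I * pr f p)


/-- The real numbers, with the discrete topology. -/
def DiscR : Type := ℝ

instance instTopDiscR : TopologicalSpace DiscR := ⊥

instance instDiscDiscR : DiscreteTopology DiscR := ⟨rfl⟩

/-- Translation of the discrete line. -/
def DiscR.shift (c : ℝ) (v : DiscR) : DiscR := (show ℝ from v) + c

/-- Bundle core of local primitives modulo constants. -/
def primCore {B : Type*} [TopologicalSpace B] (U : B → Set B) (hU : ∀ i, IsOpen (U i))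
    (hmem : ∀ i, i ∈ U i) (f : B → B → ℝ)
    (hc : ∀ i j, ∃ c : ℝ, ∀ x ∈ U i ∩ U j, f i x - f j x = c) :
    FiberBundleCore B B DiscR where
  baseSet := U
  isOpen_baseSet := hU
  indexAt := id
  mem_baseSet_at := hmem
  coordChange i j x v := DiscR.shift (f i x - f j x) v
  coordChange_self i x _ v := by
    show (show ℝ from v) + (f i x - f i x) = (show ℝ from v)
    ring
  continuousOn_coordChange i j := by
    obtain ⟨c, hc⟩ := hc i j
    have h : Continuous (DiscR.shift c) :=
      continuous_of_discreteTopology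
    refine (h.comp (continuous_snd (X := B))).continuousOn.congr ?_
    rintro ⟨x, v⟩ hx
    have := hc x hx.1
    show (show ℝ from v) + (f i x - f j x) = (show ℝ from v) + c
    rw [this]
  coordChange_comp i j k x _ v := by
    show ((show ℝ from v) + (f i x - f j x)) + (f j x - f k x) = (show ℝ from v) + (f i x - f k x)
    ring

theorem exists_glue {B : Type*} [TopologicalSpace B] [SimplyConnectedSpace B]
    [LocallyPathConnectedSpace B] (U : B → Set B) (hU : ∀ i, IsOpen (U i))
    (hmem : ∀ i, i ∈ U i) (f : B → B → ℝ)
    (hc : ∀ i j, ∃ c : ℝ, ∀ x ∈ U i ∩ U j, f i x - f j x = c) :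
    ∃ k : B → ℝ, ∀ i, ∃ c : ℝ, ∀ᶠ x in nhds i, k x = f i x + c := by
  let Z := primCore U hU hmem f hc
  have cov : IsCoveringMap Z.proj := FiberBundle.isCoveringMap (F := DiscR) (E := Z.Fiber)
  obtain ⟨b⟩ : Nonempty B := inferInstance
  obtain ⟨s, ⟨-, hs⟩, -⟩ := cov.existsUnique_continuousMap_lifts (ContinuousMap.id B) b
    (⟨b, (show ℝ from 0)⟩ : Z.TotalSpace) rfl
  have hs' : ∀ x, (s x).1 = x := fun x => congrFun hs x
  refine ⟨fun x => f (s x).1 (s x).1 + (show ℝ from (s x).2), fun i => ?_⟩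
  let g : B → DiscR := fun x => (Z.localTriv i (s x)).2
  have hg : ContinuousAt g i := by
    have h1 : ContinuousAt (Z.localTriv i) (s i) := by
      apply (Z.localTriv i).continuousAt
      rw [(Z.localTriv i).mem_source]
      show (s i).1 ∈ U i
      rw [hs' i]; exact hmem i
    exact (continuous_snd.continuousAt).comp (h1.comp s.continuous.continuousAt)
  have hg2 : ∀ᶠ x in nhds i, g x = g i := by
    have := hg.eventually (show ∀ᶠ y in nhds (g i), y = g i by simp [nhds_discrete])
    exact this
  refine ⟨(show ℝ from g i), ?_⟩
  filter_upwards [hg2] with x hx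
  have hgx : (show ℝ from g x) = (show ℝ from (s x).2) + (f (s x).1 (s x).1 - f i (s x).1) := rfl
  have e : (show ℝ from g x) = (show ℝ from g i) := hx
  rw [← e, hgx, hs' x]
  ring

theorem exists_primitive {V : Type*} [NormedAddCommGroup V] [NormedSpace ℝ V]
    (D : Set V) (hD : IsOpen D) [SimplyConnectedSpace D] (w : V → V →L[ℝ] ℝ)
    (hw : ∀ x ∈ D, ∀ r, Metric.ball x r ⊆ D →
      ∃ f : V → ℝ, ∀ a ∈ Metric.ball x r, HasFDerivAt f (w a) a) :
    ∃ k : V → ℝ, ∀ x ∈ D, HasFDerivAt k (w x) x := by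
  classical
  have hb : ∀ x : D, ∃ r > 0, Metric.ball (x : V) r ⊆ D := fun x =>
    Metric.isOpen_iff.1 hD x x.2
  choose r hr hrD using hb
  choose f hf using fun x : D => hw x x.2 (r x) (hrD x)
  have := hD.locallyPathConnectedSpace
  obtain ⟨k, hk⟩ := exists_glue (B := D) (fun i => Subtype.val ⁻¹' Metric.ball (i : V) (r i))
    (fun i => Metric.isOpen_ball.preimage continuous_subtype_val)
    (fun i => Metric.mem_ball_self (hr i)) (fun i x => f i x) (by
      intro i j
      have hpre : IsPreconnected (Metric.ball (i : V) (r i) ∩ Metric.ball (j : V) (r j)) :=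
        ((convex_ball _ _).inter (convex_ball _ _)).isPreconnected
      have hd : ∀ a ∈ Metric.ball (i : V) (r i) ∩ Metric.ball (j : V) (r j),
          HasFDerivAt (fun y => f i y - f j y) (0 : V →L[ℝ] ℝ) a := by
        intro a ha
        simpa using! (hf i a ha.1).fun_sub (hf j a ha.2)
      obtain ⟨c, hc⟩ := (Metric.isOpen_ball.inter Metric.isOpen_ball).exists_is_const_of_fderiv_eq_zero
        (𝕜 := ℝ) hpre (fun a ha => (hd a ha).differentiableAt.differentiableWithinAt)
        (fun a ha => (hd a ha).fderiv)
      exact ⟨c, fun x hx => hc x hx⟩)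
  refine ⟨fun x => if h : x ∈ D then k ⟨x, h⟩ else 0, fun x hx => ?_⟩
  obtain ⟨c, hc⟩ := hk ⟨x, hx⟩
  have h1 := (hf ⟨x, hx⟩ x (Metric.mem_ball_self (hr _))).add_const c
  refine h1.congr_of_eventuallyEq ?_
  rw [nhds_subtype_eq_comap, Filter.eventually_comap] at hc
  filter_upwards [hc, hD.mem_nhds hx] with y hy hyD
  simp only [hyD, dif_pos]
  exact hy ⟨y, hyD⟩ rfl

theorem hasDerivAt_fst {F : Type*} [NormedAddCommGroup F] [NormedSpace ℝ F] {f : ℝ × ℝ → F}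
    {f' : ℝ × ℝ →L[ℝ] F} {p : ℝ × ℝ} (h : HasFDerivAt f f' p) :
    HasDerivAt (fun t : ℝ => f (t, p.2)) (f' (1, 0)) p.1 := by
  have h2 : HasDerivAt (fun t : ℝ => (t, p.2)) ((1 : ℝ), (0 : ℝ)) p.1 :=
    (hasDerivAt_id p.1).prodMk (hasDerivAt_const p.1 p.2)
  exact HasFDerivAt.comp_hasDerivAt (l := f) p.1 h h2

theorem hasDerivAt_snd {F : Type*} [NormedAddCommGroup F] [NormedSpace ℝ F] {f : ℝ × ℝ → F}
    {f' : ℝ × ℝ →L[ℝ] F} {p : ℝ × ℝ} (h : HasFDerivAt f f' p) :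
    HasDerivAt (fun t : ℝ => f (p.1, t)) (f' (0, 1)) p.2 := by
  have h2 : HasDerivAt (fun t : ℝ => (p.1, t)) ((0 : ℝ), (1 : ℝ)) p.2 :=
    (hasDerivAt_const p.2 p.1).prodMk (hasDerivAt_id p.2)
  exact HasFDerivAt.comp_hasDerivAt (l := f) p.2 h h2

theorem pz_eq {f : ℝ × ℝ → ℂ} {f' : ℝ × ℝ →L[ℝ] ℂ} {p : ℝ × ℝ} (h : HasFDerivAt f f' p) :
    pz f p = f' (1, 0) := (hasDerivAt_fst h).deriv

theorem pr_eq {f : ℝ × ℝ → ℂ} {f' : ℝ × ℝ →L[ℝ] ℂ} {p : ℝ × ℝ} (h : HasFDerivAt f f' p) :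
    pr f p = f' (0, 1) := (hasDerivAt_snd h).deriv

theorem pz_conj (f : ℝ × ℝ → ℂ) (p : ℝ × ℝ) :
    pz (fun q => (starRingEnd ℂ) (f q)) p = (starRingEnd ℂ) (pz f p) :=
  deriv.star (𝕜 := ℝ) (f := fun t : ℝ => f (t, p.2)) (x := p.1)

theorem pr_conj (f : ℝ × ℝ → ℂ) (p : ℝ × ℝ) :
    pr (fun q => (starRingEnd ℂ) (f q)) p = (starRingEnd ℂ) (pr f p) :=
  deriv.star (𝕜 := ℝ) (f := fun t : ℝ => f (p.1, t)) (x := p.2)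

/-- The right-hand side of the equation for `k`. -/
def rhsG (E : ℝ × ℝ → ℂ) (q : ℝ × ℝ) : ℂ :=
  2 * Complex.I * (q.2 : ℂ) *
          (dXi E q * dXi (fun r => (starRingEnd ℂ) (E r)) q) /
          (E q + (starRingEnd ℂ) (E q)) ^ 2

theorem rhsG_eq (E : ℝ × ℝ → ℂ) (q : ℝ × ℝ) : rhsG E q =
    (Complex.I / 2) * ((q.2 : ℂ) *
      ((pz E q - Complex.I * pr E q) * (star (pz E q) - Complex.I * star (pr E q)))) /
      (E q + star (E q)) ^ 2 := by
  unfold rhsG dXi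
  rw [pz_conj, pr_conj]
  simp only [starRingEnd_apply]
  ring

/-- One-variable product rule for the right-hand side. -/
theorem hasDerivAt_rhs {r e u v : ℝ → ℂ} {r' e' u' v' : ℂ} {t : ℝ}
    (hr : HasDerivAt r r' t) (he : HasDerivAt e e' t) (hu : HasDerivAt u u' t)
    (hv : HasDerivAt v v' t) (hne : e t + star (e t) ≠ 0) :
    HasDerivAt (fun x => (Complex.I / 2) * (r x *
      ((u x - Complex.I * v x) * (star (u x) - Complex.I * star (v x)))) /
      (e x + star (e x)) ^ 2)
      ((Complex.I / 2) * ((r' * ((u t - Complex.I * v t) * (star (u t) - Complex.I * star (v t)))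
        + r t * ((u' - Complex.I * v') * (star (u t) - Complex.I * star (v t))
          + (u t - Complex.I * v t) * (star u' - Complex.I * star v'))) * (e t + star (e t))
        - 2 * (r t * ((u t - Complex.I * v t) * (star (u t) - Complex.I * star (v t))))
          * (e' + star e')) / (e t + star (e t)) ^ 3) t := by
  have h1 := hu.fun_sub (hv.const_mul Complex.I)
  have h2 := hu.star.fun_sub (hv.star.const_mul Complex.I)
  have h3 := ((hr.fun_mul (h1.fun_mul h2)).const_mul (Complex.I / 2)).fun_div
    ((he.fun_add he.star).fun_pow 2) (pow_ne_zero 2 hne)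
  convert! h3 using 1
  field_simp
  push_cast
  ring

/-- The algebraic core of the integrability condition. -/
theorem alg_core (r s u v ub vb uz vz vr uzb vzb vrb I : ℂ) (hI : I ^ 2 = -1)
    (hr : r ≠ 0) (hs : s ≠ 0)
    (h1 : s * (uz + r⁻¹ * v + vr) = 2 * (u ^ 2 + v ^ 2))
    (h2 : s * (uzb + r⁻¹ * vb + vrb) = 2 * (ub ^ 2 + vb ^ 2)) :
    (2 : ℂ)⁻¹ * ((I / 2) * ((0 * ((u - I * v) * (ub - I * vb))
        + r * ((uz - I * vz) * (ub - I * vb)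
          + (u - I * v) * (uzb - I * vzb))) * s
        - 2 * (r * ((u - I * v) * (ub - I * vb))) * (u + ub)) / s ^ 3
      + I * ((I / 2) * ((1 * ((u - I * v) * (ub - I * vb))
        + r * ((vz - I * vr) * (ub - I * vb)
          + (u - I * v) * (vzb - I * vrb))) * s
        - 2 * (r * ((u - I * v) * (ub - I * vb))) * (v + vb)) / s ^ 3))
      = - (u * ub + v * vb) / (4 * s ^ 2) := by
  have e1 : uz = 2 * (u ^ 2 + v ^ 2) / s - v / r - vr := by
    field_simp
    field_simp at h1
    linear_combination h1
  have e2 : uzb = 2 * (ub ^ 2 + vb ^ 2) / s - vb / r - vrb := by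
    field_simp
    field_simp at h2
    linear_combination h2
  subst e1 e2
  have hI3 : I ^ 3 = -I := by rw [pow_succ, hI]; ring
  have hI4 : I ^ 4 = 1 := by rw [show I ^ 4 = (I ^ 2) ^ 2 by ring, hI]; ring
  field_simp
  ring_nf
  simp only [hI, hI3, hI4]
  ring

/-- Everything about the potential at a point that is needed below. -/
theorem regularity {D : Set (ℝ × ℝ)} (hD : IsOpen D) {E : ℝ × ℝ → ℂ} (hE : ContDiffOn ℝ 2 E D) :
    ContDiffOn ℝ 1 (pz E) D ∧ ContDiffOn ℝ 1 (pr E) D ∧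
      (∀ p ∈ D, DifferentiableAt ℝ E p) ∧ ∀ p ∈ D, pr (pz E) p = pz (pr E) p := by
  have hd : ∀ p ∈ D, DifferentiableAt ℝ E p := fun p hp =>
    (hE.differentiableOn (by norm_num)).differentiableAt (hD.mem_nhds hp)
  have hf : ContDiffOn ℝ 1 (fderiv ℝ E) D := hE.fderiv_of_isOpen hD (by norm_num)
  have ez : ∀ p ∈ D, pz E p = fderiv ℝ E p (1, 0) := fun p hp => pz_eq (hd p hp).hasFDerivAt
  have er : ∀ p ∈ D, pr E p = fderiv ℝ E p (0, 1) := fun p hp => pr_eq (hd p hp).hasFDerivAt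
  refine ⟨(hf.clm_apply contDiffOn_const).congr ez, (hf.clm_apply contDiffOn_const).congr er,
    hd, fun p hp => ?_⟩
  have hff : HasFDerivAt (fderiv ℝ E) (fderiv ℝ (fderiv ℝ E) p) p :=
    ((hf.differentiableOn (by norm_num)).differentiableAt (hD.mem_nhds hp)).hasFDerivAt
  have hz : HasFDerivAt (pz E) ((fderiv ℝ (fderiv ℝ E) p).flip (1, 0)) p := by
    have h := hff.clm_apply (hasFDerivAt_const ((1 : ℝ), (0 : ℝ)) p)
    refine (h.congr_of_eventuallyEq ?_).congr_fderiv (by ext <;> simp)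
    filter_upwards [hD.mem_nhds hp] with q hq using ez q hq
  have hr : HasFDerivAt (pr E) ((fderiv ℝ (fderiv ℝ E) p).flip (0, 1)) p := by
    have h := hff.clm_apply (hasFDerivAt_const ((0 : ℝ), (1 : ℝ)) p)
    refine (h.congr_of_eventuallyEq ?_).congr_fderiv (by ext <;> simp)
    filter_upwards [hD.mem_nhds hp] with q hq using er q hq
  rw [pr_eq hz, pz_eq hr]
  exact ((hE.contDiffAt (hD.mem_nhds hp)).isSymmSndFDerivAt (by simp)) _ _

theorem add_star_ne {z : ℂ} (h : 0 < z.re) : z + star z ≠ 0 := by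
  intro h0
  have := congrArg Complex.re h0
  simp at this
  linarith

theorem rhsG_contDiffOn {D : Set (ℝ × ℝ)} (hD : IsOpen D) {E : ℝ × ℝ → ℂ}
    (hE : ContDiffOn ℝ 2 E D) (hRe : ∀ p ∈ D, 0 < (E p).re) :
    ContDiffOn ℝ 1 (rhsG E) D := by
  obtain ⟨hz, hr, -, -⟩ := regularity hD hE
  have hE1 : ContDiffOn ℝ 1 E D := hE.of_le (by norm_num)
  have hstar : ∀ {f : ℝ × ℝ → ℂ}, ContDiffOn ℝ 1 f D → ContDiffOn ℝ 1 (fun q => star (f q)) D :=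
    fun hf => Complex.conjCLE.contDiff.comp_contDiffOn hf
  have hrho : ContDiffOn ℝ 1 (fun q : ℝ × ℝ => (q.2 : ℂ)) D :=
    (Complex.ofRealCLM.contDiff.comp contDiff_snd).contDiffOn
  have h := (contDiffOn_const (c := Complex.I / 2)).mul (hrho.mul
    ((hz.sub (contDiffOn_const (c := Complex.I) |>.mul hr)).mul
      ((hstar hz).sub (contDiffOn_const (c := Complex.I) |>.mul (hstar hr)))))
  exact (h.mul (((hE1.add (hstar hE1)).pow 2).inv
    (fun p hp => pow_ne_zero 2 (add_star_ne (hRe p hp))))).congr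
      (fun q _ => (rhsG_eq E q).trans (div_eq_mul_inv _ _))

theorem dXiBar_rhsG {D : Set (ℝ × ℝ)} (hD : IsOpen D) (hDhalf : ∀ p ∈ D, 0 < p.2)
    {E : ℝ × ℝ → ℂ} (hE : ContDiffOn ℝ 2 E D) (hRe : ∀ p ∈ D, 0 < (E p).re)
    {p : ℝ × ℝ} (hp : p ∈ D)
    (hErnst : (E p + (starRingEnd ℂ) (E p)) *
          (pz (pz E) p + (p.2 : ℂ)⁻¹ * pr E p + pr (pr E) p)
        = 2 * ((pz E p) ^ 2 + (pr E p) ^ 2)) :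
    (dXiBar (rhsG E) p).im = 0 := by
  obtain ⟨hz, hr, hd, hsymm⟩ := regularity hD hE
  have dz : DifferentiableAt ℝ (pz E) p :=
    (hz.differentiableOn (by norm_num)).differentiableAt (hD.mem_nhds hp)
  have dr : DifferentiableAt ℝ (pr E) p :=
    (hr.differentiableOn (by norm_num)).differentiableAt (hD.mem_nhds hp)
  have tz : ∀ {f : ℝ × ℝ → ℂ}, DifferentiableAt ℝ f p →
      HasDerivAt (fun t : ℝ => f (t, p.2)) (pz f p) p.1 := fun hf =>
    (hasDerivAt_fst hf.hasFDerivAt).differentiableAt.hasDerivAt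
  have tr : ∀ {f : ℝ × ℝ → ℂ}, DifferentiableAt ℝ f p →
      HasDerivAt (fun t : ℝ => f (p.1, t)) (pr f p) p.2 := fun hf =>
    (hasDerivAt_snd hf.hasFDerivAt).differentiableAt.hasDerivAt
  have hne := add_star_ne (hRe p hp)
  have Gz := (hasDerivAt_rhs (hasDerivAt_const p.1 (p.2 : ℂ)) (tz (hd p hp)) (tz dz) (tz dr)
    hne).deriv
  have Gr := (hasDerivAt_rhs (r := fun t : ℝ => (t : ℂ)) (hasDerivAt_id p.2).ofReal_comp
    (tr (hd p hp)) (tr dz) (tr dr) hne).deriv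
  have e : dXiBar (rhsG E) p = -(pz E p * star (pz E p) + pr E p * star (pr E p)) /
      (4 * (E p + star (E p)) ^ 2) := by
    have h2 := congrArg star hErnst
    simp only [starRingEnd_apply] at hErnst
    simp only [starRingEnd_apply, star_mul', star_add, star_star, star_inv₀, star_pow] at h2
    have hρ : star ((p.2 : ℝ) : ℂ) = p.2 := Complex.conj_ofReal _
    rw [hρ, add_comm (star (E p)) (E p)] at h2
    have s2 : star (2 : ℂ) = 2 := by simp
    rw [s2] at h2
    rw [← alg_core (p.2 : ℂ) (E p + star (E p)) (pz E p) (pr E p) (star (pz E p)) (star (pr E p))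
      (pz (pz E) p) (pz (pr E) p) (pr (pr E) p) (star (pz (pz E) p)) (star (pz (pr E) p))
      (star (pr (pr E) p)) Complex.I Complex.I_sq
      (by exact_mod_cast (hDhalf p hp).ne') hne hErnst h2]
    unfold dXiBar
    have fe : rhsG E = fun q => _ := funext (rhsG_eq E)
    rw [fe]
    unfold pz pr at *
    erw [Gz, Gr]
    simp only [← hsymm p hp, Complex.ofReal_one]
  rw [e]
  have hc : (starRingEnd ℂ) (-(pz E p * star (pz E p) + pr E p * star (pr E p)) /
      (4 * (E p + star (E p)) ^ 2)) = -(pz E p * star (pz E p) + pr E p * star (pr E p)) /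
      (4 * (E p + star (E p)) ^ 2) := by
    have s4 : star (4 : ℂ) = 4 := by simp
    simp only [starRingEnd_apply, star_div₀, star_neg, star_mul', star_add, star_star, star_pow, s4]
    ring
  exact Complex.conj_eq_iff_im.1 hc

theorem exists_k {D : Set (ℝ × ℝ)} (hD : IsOpen D) (hDsc : SimplyConnectedSpace D)
    {G : ℝ × ℝ → ℂ} (hG : ContDiffOn ℝ 1 G D) (hclosed : ∀ p ∈ D, (dXiBar G p).im = 0) :
    ∃ k : ℝ × ℝ → ℝ, ContDiffOn ℝ 1 k D ∧ ∀ p ∈ D, dXi (fun q => (k q : ℂ)) p = G p := by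
  let w : ℝ × ℝ → (ℝ × ℝ →L[ℝ] ℝ) := fun p =>
    (2 * (G p).re) • ContinuousLinearMap.fst ℝ ℝ ℝ + (-2 * (G p).im) • ContinuousLinearMap.snd ℝ ℝ ℝ
  let dw : ℝ × ℝ → (ℝ × ℝ →L[ℝ] ℝ × ℝ →L[ℝ] ℝ) := fun p =>
    ((2 : ℝ) • (Complex.reCLM ∘L fderiv ℝ G p)).smulRight (ContinuousLinearMap.fst ℝ ℝ ℝ) +
    ((-2 : ℝ) • (Complex.imCLM ∘L fderiv ℝ G p)).smulRight (ContinuousLinearMap.snd ℝ ℝ ℝ)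
  have hGd : ∀ p ∈ D, HasFDerivAt G (fderiv ℝ G p) p := fun p hp =>
    ((hG.differentiableOn (by norm_num)).differentiableAt (hD.mem_nhds hp)).hasFDerivAt
  have hwd : ∀ p ∈ D, HasFDerivAt w (dw p) p := by
    intro p hp
    have hre : HasFDerivAt (fun q => 2 * (G q).re)
        ((2 : ℝ) • (Complex.reCLM ∘L fderiv ℝ G p)) p :=
      (Complex.reCLM.hasFDerivAt.comp p (hGd p hp)).const_mul 2
    have him : HasFDerivAt (fun q => -2 * (G q).im)
        ((-2 : ℝ) • (Complex.imCLM ∘L fderiv ℝ G p)) p :=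
      (Complex.imCLM.hasFDerivAt.comp p (hGd p hp)).const_mul (-2)
    have h1 := hre.smul_const (ContinuousLinearMap.fst ℝ ℝ ℝ)
    have h2 := him.smul_const (ContinuousLinearMap.snd ℝ ℝ ℝ)
    exact h1.fun_add h2
  have hsym : ∀ p ∈ D, ∀ x y, dw p x y = dw p y x := by
    intro p hp x y
    have hc := hclosed p hp
    have key : (fderiv ℝ G p (0, 1)).re = - (fderiv ℝ G p (1, 0)).im := by
      unfold dXiBar at hc
      rw [pz_eq (hGd p hp), pr_eq (hGd p hp)] at hc
      simp at hc
      linarith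
    have dec : ∀ x : ℝ × ℝ, fderiv ℝ G p x =
        x.1 • fderiv ℝ G p (1, 0) + x.2 • fderiv ℝ G p (0, 1) := by
      intro x
      rw [← map_smul, ← map_smul, ← map_add]
      simp
    simp only [dw, ContinuousLinearMap.add_apply, ContinuousLinearMap.smulRight_apply,
      ContinuousLinearMap.smul_apply, ContinuousLinearMap.comp_apply, Complex.reCLM_apply,
      Complex.imCLM_apply, ContinuousLinearMap.coe_fst', ContinuousLinearMap.coe_snd', smul_eq_mul]
    rw [dec x, dec y]
    simp [key]
    ring
  obtain ⟨k, hk⟩ := exists_primitive D hD w (fun x _ r hsub =>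
    (convex_ball x r).exists_forall_hasFDerivWithinAt_of_hasFDerivWithinAt_symmetric
      (fun a ha => (hwd a (hsub ha)).hasFDerivWithinAt)
      (fun a ha x _ y _ => hsym a (hsub ha) x y) |>.imp fun f hf a ha =>
        (hf a ha).hasFDerivAt (Metric.isOpen_ball.mem_nhds ha))
  refine ⟨k, ?_, fun p hp => ?_⟩
  · rw [show (1 : WithTop ℕ∞) = 0 + 1 from rfl, contDiffOn_succ_iff_fderiv_of_isOpen hD]
    refine ⟨fun p hp => (hk p hp).differentiableAt.differentiableWithinAt, by simp, ?_⟩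
    rw [contDiffOn_zero]
    have hwc : ContinuousOn w D := fun p hp => (hwd p hp).continuousAt.continuousWithinAt
    exact hwc.congr fun p hp => (hk p hp).fderiv
  · have h := Complex.ofRealCLM.hasFDerivAt.comp p (hk p hp)
    unfold dXi
    have e1 := pz_eq h
    have e2 := pr_eq h
    change pz (fun q => (k q : ℂ)) p = _ at e1
    change pr (fun q => (k q : ℂ)) p = _ at e2
    rw [e1, e2]
    apply Complex.ext <;> simp [w]

theorem conformal_factor_k_exists
    (D : Set (ℝ × ℝ)) (hD : IsOpen D) (hDhalf : ∀ p ∈ D, 0 < p.2)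
    (hDsc : SimplyConnectedSpace D)
    (E : ℝ × ℝ → ℂ) (hE : ContDiffOn ℝ 2 E D)
    (hRe : ∀ p ∈ D, 0 < (E p).re)
    (hErnst : ∀ p ∈ D,
      (E p + (starRingEnd ℂ) (E p)) *
          (pz (pz E) p + (p.2 : ℂ)⁻¹ * pr E p + pr (pr E) p)
        = 2 * ((pz E p) ^ 2 + (pr E p) ^ 2)) :
    (∃ k : ℝ × ℝ → ℝ, ContDiffOn ℝ 1 k D ∧
      ∀ p ∈ D,
        dXi (fun q => (k q : ℂ)) p
          = 2 * Complex.I * (p.2 : ℂ) *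
              (dXi E p * dXi (fun q => (starRingEnd ℂ) (E q)) p) /
              (E p + (starRingEnd ℂ) (E p)) ^ 2) ∧
    (∀ p ∈ D,
      (dXiBar (fun q => 2 * Complex.I * (q.2 : ℂ) *
          (dXi E q * dXi (fun r => (starRingEnd ℂ) (E r)) q) /
          (E q + (starRingEnd ℂ) (E q)) ^ 2) p).im = 0) := by
  refine ⟨?_, fun p hp => dXiBar_rhsG hD hDhalf hE hRe hp (hErnst p hp)⟩
  exact exists_k hD hDsc (rhsG_contDiffOn hD hE hRe)
    (fun p hp => dXiBar_rhsG hD hDhalf hE hRe hp (hErnst p hp))
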